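/- arXiv:1512.05996 — 3 statements merged into one kernel-verified Lean document; each statement's English description precedes it below -/
import Mathlib

section
/- Every non-trivial hereditary graph property π is satisfied either by all complete graphs or by all edgeless graphs; that is, either for every n the complete graph K_n satisfies π, or for every n the edgeless graph on n vertices (the complement of K_n) satisfies π. -/
/-!
By Ramsey's theorem (`exists_ramsey`), every graph on sufficiently many vertices contains a clique
on `a` vertices or an independent set on `b` vertices. Only finitely many graphs live on at most
`N` vertices, so a property with infinitely many members has arbitrarily large members. If it
is moreover hereditary and omitted both some `K_a` and some edgeless graph on `b` vertices, a member
on at least `R(a, b)` vertices would contain one of them as an induced subgraph, a contradiction.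
-/

/-- Finite Ramsey theorem for two colours. It is stated for cliques inside a vertex set `S` of an
ambient graph, so that the induction can pass to neighbourhoods without changing the graph. -/
theorem exists_ramsey (a b : ℕ) : ∃ N : ℕ, ∀ (n : ℕ) (G : SimpleGraph (Fin n)) (S : Finset (Fin n)),
    N ≤ S.card → (∃ t ⊆ S, G.IsNClique a t) ∨ (∃ t ⊆ S, Gᶜ.IsNClique b t) := by
  classical
  induction a generalizing b with
  | zero => exact ⟨0, fun n G S _ => Or.inl ⟨∅, by simp, by simp⟩⟩
  | succ a iha =>
    induction b with
    | zero => exact ⟨0, fun n G S _ => Or.inr ⟨∅, by simp, by simp⟩⟩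
    | succ b ihb =>
      obtain ⟨N₁, h₁⟩ := iha (b + 1)
      obtain ⟨N₂, h₂⟩ := ihb
      refine ⟨N₁ + N₂ + 1, fun n G S hS => ?_⟩
      obtain ⟨v, hv⟩ : S.Nonempty := Finset.card_pos.mp (by omega)
      have hcard := Finset.card_filter_add_card_filter_not (s := S.erase v) (fun w => G.Adj v w)
      rw [Finset.card_erase_of_mem hv] at hcard
      have hsub : ∀ (p : Fin n → Prop) [DecidablePred p], (S.erase v).filter p ⊆ S :=
        fun p _ => (Finset.filter_subset _ _).trans (Finset.erase_subset _ _)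
      -- Pigeonhole: `v` has at least `N₁` neighbours or at least `N₂` non-neighbours in `S`.
      rcases Nat.lt_or_ge ((S.erase v).filter fun w => G.Adj v w).card N₁ with hlt | hge
      · rcases h₂ n G ((S.erase v).filter fun w => ¬ G.Adj v w) (by omega) with
          ⟨t, ht, hc⟩ | ⟨t, ht, hc⟩
        · exact Or.inl ⟨t, ht.trans (hsub _), hc⟩
        · refine Or.inr ⟨insert v t, Finset.insert_subset hv (ht.trans (hsub _)),
            hc.insert fun w hw => ?_⟩
          have hw' := ht hw
          simp only [Finset.mem_filter, Finset.mem_erase] at hw'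
          exact (SimpleGraph.compl_adj _ _ _).mpr ⟨hw'.1.1.symm, hw'.2⟩
      · rcases h₁ n G _ hge with ⟨t, ht, hc⟩ | ⟨t, ht, hc⟩
        · exact Or.inl ⟨insert v t, Finset.insert_subset hv (ht.trans (hsub _)),
            hc.insert fun w hw => (Finset.mem_filter.mp (ht hw)).2⟩
        · exact Or.inr ⟨t, ht.trans (hsub _), hc⟩

/-- There are only finitely many graphs on fewer than `N` vertices, so an infinite set of graphs
has a member on at least `N` vertices. -/
theorem exists_large_mem {A : Set (Σ n : ℕ, SimpleGraph (Fin n))} (hA : A.Infinite) (N : ℕ) :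
    ∃ p ∈ A, N ≤ p.1 := by
  by_contra! h
  refine hA (Set.Finite.subset (s := (Set.Iio N).sigma fun _ => Set.univ) ?_ ?_)
  · rw [Set.sigma_eq_biUnion]
    exact (Set.finite_Iio N).biUnion fun i _ => (Set.toFinite _).image _
  · exact fun p hp => ⟨h p hp, trivial⟩

theorem nonempty_top_embedding {a n : ℕ} {G : SimpleGraph (Fin n)} {t : Finset (Fin n)}
    (h : G.IsNClique a t) : Nonempty ((⊤ : SimpleGraph (Fin a)) ↪g G) :=
  ⟨SimpleGraph.topEmbeddingOfNotCliqueFree h.not_cliqueFree⟩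

/-- Every non-trivial hereditary graph property `π` is satisfied either by
all complete graphs or by all edgeless graphs.  A graph property is modelled as a predicate
`P n G` on simple graphs `G` on the vertex set `Fin n`, closed under isomorphism.
Heredity: if `G` satisfies `P` then so does every induced subgraph of `G` (a graph `H`
admitting a graph embedding `H ↪g G`, which preserves adjacency and non-adjacency).
Non-triviality: infinitely many graphs (equivalently, infinitely many pairwise
non-isomorphic graphs, since each isomorphism class has only finitely many
representatives on each `Fin n`) satisfy `P`, and infinitely many do not. -/
theorem stmt_0
    (P : ∀ n : ℕ, SimpleGraph (Fin n) → Prop)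
    (hiso : ∀ (n : ℕ) (G G' : SimpleGraph (Fin n)), Nonempty (G ≃g G') → P n G → P n G')
    (hhered : ∀ (m n : ℕ) (H : SimpleGraph (Fin m)) (G : SimpleGraph (Fin n)),
      P n G → Nonempty (H ↪g G) → P m H)
    (hinf : {p : Σ n : ℕ, SimpleGraph (Fin n) | P p.1 p.2}.Infinite)
    (hinf' : {p : Σ n : ℕ, SimpleGraph (Fin n) | ¬ P p.1 p.2}.Infinite) :
    (∀ n : ℕ, P n (⊤ : SimpleGraph (Fin n))) ∨ (∀ n : ℕ, P n (⊥ : SimpleGraph (Fin n))) := by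
  by_contra! h
  obtain ⟨⟨a, ha⟩, b, hb⟩ := h
  obtain ⟨N, hN⟩ := exists_ramsey a b
  obtain ⟨⟨n, G⟩, hG, hn⟩ := exists_large_mem hinf N
  rcases hN n G Finset.univ (by simpa using hn) with ⟨t, -, ht⟩ | ⟨t, -, ht⟩
  · exact ha (hhered a n ⊤ G hG (nonempty_top_embedding ht))
  · obtain ⟨e⟩ := nonempty_top_embedding ht
    -- Complementing an embedding of `K_b` into `Gᶜ` embeds the edgeless graph into `G`.
    exact hb (hhered b n ⊥ G hG ⟨SimpleGraph.Embedding.complEquiv.symm (by simpa using e)⟩)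
end

section
/- For every finite simple graph H there exist a natural number n₀ and a real constant α > 0 such that for all n > n₀ there exists a graph G on n vertices with the property that every induced subgraph of G on at least α·log₂ n vertices contains H as an induced subgraph. -/
/-!
The graph `G` is found by counting 2-colourings `c` of the unordered pairs of vertices (a uniformly
random graph), with a union bound over large vertex sets.

A bound `2 ^ (-Ω(m²))` is needed on the proportion of colourings in which a fixed set of `m`
vertices contains no induced copy of `H`. For `m = k p` with `p ≥ k` prime, identify the set with
the grid `Fin k × ZMod p`. The `p²` non-vertical lines `{(i, a i + b) : i < k}` pairwise share at
most one point, so the sets of pairs they span are disjoint (`disjoint_linePairs`), and the events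
"line `(a, b)` carries a copy of `H`" are independent, each of probability at least `2 ^ (-k²)`.
Hence all of them fail with probability at most `(1 - 2 ^ (-k²)) ^ (p²)` (`card_avoid_le`). There
are at most `n ^ (k p)` grids, so a good colouring exists once `n ^ k (1 - 2 ^ (-k²)) ^ p < 1`
(`exists_good`). This holds for `p > k 2 ^ (k²) log n`, and Bertrand's postulate provides a prime
`p = O(log n)` of this kind.
-/

open Finset

/-- Colourings `c` that disagree with the target `g` somewhere on every `T j`, `j ∈ J`. -/
def avoid {E ι : Type*} [Fintype E] [DecidableEq E] (g : E → Bool) (T : ι → Finset E)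
    (J : Finset ι) : Finset (E → Bool) :=
  univ.filter fun c => ∀ j ∈ J, ∃ e ∈ T j, c e ≠ g e

/-- For disjoint sets `T j` of size at most `q`, the disagreement events are independent, each of
probability at most `1 - 2 ^ (-q)`. -/
lemma card_avoid_le {E ι : Type*} [Fintype E] [DecidableEq E] [DecidableEq ι] (g : E → Bool)
    (T : ι → Finset E) (q : ℕ) (hq : ∀ j, (T j).card ≤ q)
    (hT : ∀ i j, i ≠ j → Disjoint (T i) (T j)) (J : Finset ι) :
    ((avoid g T J).card : ℝ) ≤ 2 ^ Fintype.card E * (1 - (2 ^ q)⁻¹) ^ J.card := by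
  induction J using Finset.induction_on with
  | empty => simp [avoid]
  | insert j J hj ih =>
    set A := avoid g T J with hA
    set M := A.filter fun c => ∀ e ∈ T j, c e = g e with hM
    have hsplit : (avoid g T (insert j J)).card + M.card = A.card := by
      have h1 : avoid g T (insert j J) = A.filter fun c => ¬ ∀ e ∈ T j, c e = g e := by
        ext c
        simp only [avoid, hA, mem_filter, mem_univ, true_and, mem_insert, forall_eq_or_imp,
          not_forall, exists_prop]
        tauto
      rw [h1, add_comm]
      exact card_filter_add_card_filter_not _
    -- Overwriting `c` by `g` on `T j` does not affect the other `T i`; the map is at most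
    -- `2 ^ q`-to-one because `c` is recovered from its values on `T j`.
    have hfib : A.card ≤ M.card * 2 ^ q := by
      have : A.card ≤ (M ×ˢ (univ : Finset (T j → Bool))).card := by
        apply card_le_card_of_injOn
          (fun c => ((fun e => if e ∈ T j then g e else c e), fun e => c e.1))
        · intro c hc
          have hc' : ∀ i ∈ J, ∃ e ∈ T i, c e ≠ g e := by
            simpa [hA, avoid] using hc
          simp only [coe_product, Set.mem_prod, mem_coe, mem_univ, and_true, hM, hA, avoid,
            mem_filter, true_and]
          refine ⟨fun i hi => ?_, fun e he => by simp [he]⟩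
          obtain ⟨e, he, hne⟩ := hc' i hi
          have hij : i ≠ j := fun h => hj (h ▸ hi)
          have : e ∉ T j := fun h => (Finset.disjoint_left.mp (hT i j hij)) he h
          exact ⟨e, he, by simpa [this] using hne⟩
        · intro c _ d _ h
          simp only [Prod.mk.injEq] at h
          funext e
          by_cases he : e ∈ T j
          · exact congrFun h.2 ⟨e, he⟩
          · have := congrFun h.1 e
            simpa [he] using this
      refine this.trans ?_
      rw [card_product]
      apply Nat.mul_le_mul_left
      rw [card_univ, Fintype.card_fun, Fintype.card_bool, Fintype.card_coe]
      exact Nat.pow_le_pow_right (by norm_num) (hq j)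
    have hs : ((avoid g T (insert j J)).card : ℝ) + M.card = A.card := by exact_mod_cast hsplit
    have hf : (A.card : ℝ) ≤ M.card * 2 ^ q := by exact_mod_cast hfib
    have hf' : (A.card : ℝ) * (2 ^ q)⁻¹ ≤ M.card := by
      rw [← div_eq_mul_inv, div_le_iff₀ (by positivity)]; exact hf
    have hr : (0 : ℝ) ≤ 1 - (2 ^ q)⁻¹ := by
      have : ((2 : ℝ) ^ q)⁻¹ ≤ 1 := inv_le_one_of_one_le₀ (one_le_pow₀ (by norm_num))
      linarith
    rw [card_insert_of_notMem hj, pow_succ, ← mul_assoc]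
    calc ((avoid g T (insert j J)).card : ℝ) ≤ A.card * (1 - (2 ^ q)⁻¹) := by linarith
      _ ≤ _ := mul_le_mul_of_nonneg_right ih hr

/-- The `i`-th point `(i, a i + b)` of the line `(a, b)` in the grid `Fin k × ZMod p`. -/
def linePt (k p : ℕ) (l : ZMod p × ZMod p) (i : Fin k) : Fin k × ZMod p :=
  (i, l.1 * ((i : ℕ) : ZMod p) + l.2)

/-- The pairs of distinct vertices spanned by the image under `f` of the line `l`. -/
def linePairs {k p n : ℕ} (f : Fin k × ZMod p → Fin n) (l : ZMod p × ZMod p) :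
    Finset (Sym2 (Fin n)) :=
  (univ.filter fun x : Fin k × Fin k => x.1 ≠ x.2).image
    fun x => s(f (linePt k p l x.1), f (linePt k p l x.2))

lemma card_linePairs_le {k p n : ℕ} (f : Fin k × ZMod p → Fin n) (l : ZMod p × ZMod p) :
    (linePairs f l).card ≤ k ^ 2 := by
  refine card_image_le.trans ((card_le_univ _).trans ?_)
  simp [sq]

/-- Two non-vertical lines agreeing at two abscissas coincide. -/
lemma line_eq {k p : ℕ} [Fact p.Prime] (hkp : k ≤ p) {l l' : ZMod p × ZMod p} {i j : Fin k}
    (hij : i ≠ j) (hi : linePt k p l i = linePt k p l' i) (hj : linePt k p l j = linePt k p l' j) :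
    l = l' := by
  simp only [linePt, Prod.mk.injEq, true_and] at hi hj
  have hne : ((i : ℕ) : ZMod p) - ((j : ℕ) : ZMod p) ≠ 0 := by
    intro h
    have h2 := sub_eq_zero.mp h
    rw [ZMod.natCast_eq_natCast_iff', Nat.mod_eq_of_lt (i.2.trans_le hkp),
      Nat.mod_eq_of_lt (j.2.trans_le hkp)] at h2
    exact hij (Fin.ext h2)
  have h0 : (l.1 - l'.1) * (((i : ℕ) : ZMod p) - ((j : ℕ) : ZMod p)) = 0 := by
    linear_combination hi - hj
  have h1 : l.1 = l'.1 := sub_eq_zero.mp ((mul_eq_zero.mp h0).resolve_right hne)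
  refine Prod.ext h1 ?_
  rw [h1] at hi
  exact add_left_cancel hi

lemma disjoint_linePairs {k p n : ℕ} [Fact p.Prime] (hkp : k ≤ p) {f : Fin k × ZMod p → Fin n}
    (hf : Function.Injective f) (l l' : ZMod p × ZMod p) (h : l ≠ l') :
    Disjoint (linePairs f l) (linePairs f l') := by
  rw [Finset.disjoint_left]
  intro e he he'
  simp only [linePairs, mem_image, mem_filter, mem_univ, true_and, Prod.exists] at he he'
  obtain ⟨i, j, hij, rfl⟩ := he
  obtain ⟨i', j', -, heq⟩ := he'
  apply h
  rw [Sym2.eq_iff] at heq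
  rcases heq with ⟨h1, h2⟩ | ⟨h1, h2⟩
  · have h1 := hf h1
    have h2 := hf h2
    obtain rfl : i' = i := congrArg Prod.fst h1
    obtain rfl : j' = j := congrArg Prod.fst h2
    exact line_eq hkp hij h1.symm h2.symm
  · have h1 := hf h1
    have h2 := hf h2
    obtain rfl : i' = j := congrArg Prod.fst h1
    obtain rfl : j' = i := congrArg Prod.fst h2
    exact line_eq hkp hij h2.symm h1.symm

open Classical in
/-- The colouring of pairs that puts a copy of `H` on every line of the grid `f`: two points are
joined when their rows are adjacent in `H`. -/
noncomputable def target {k p n : ℕ} (H : SimpleGraph (Fin k)) (f : Fin k × ZMod p → Fin n)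
    (e : Sym2 (Fin n)) : Bool :=
  decide (∃ x y : Fin k × ZMod p, H.Adj x.1 y.1 ∧ e = s(f x, f y))

lemma target_mk {k p n : ℕ} (H : SimpleGraph (Fin k)) {f : Fin k × ZMod p → Fin n}
    (hf : Function.Injective f) (x y : Fin k × ZMod p) :
    target H f s(f x, f y) = true ↔ H.Adj x.1 y.1 := by
  simp only [target, decide_eq_true_eq]
  constructor
  · rintro ⟨x', y', hadj, heq⟩
    rw [Sym2.eq_iff] at heq
    rcases heq with ⟨h1, h2⟩ | ⟨h1, h2⟩
    · rw [hf h1, hf h2]; exact hadj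
    · rw [hf h1, hf h2]; exact hadj.symm
  · intro h
    exact ⟨x, y, h, rfl⟩

/-- Union bound: some colouring matches the target on at least one line of every grid. -/
lemma exists_good {k p n : ℕ} [Fact p.Prime] (hkp : k ≤ p) (H : SimpleGraph (Fin k))
    (hlt : (n : ℝ) ^ k * (1 - (2 ^ (k ^ 2))⁻¹) ^ p < 1) :
    ∃ c : Sym2 (Fin n) → Bool, ∀ f : Fin k × ZMod p → Fin n, Function.Injective f →
      ∃ l, ∀ e ∈ linePairs f l, c e = target H f e := by
  classical
  by_contra! hcon
  set r : ℝ := 1 - (2 ^ (k ^ 2))⁻¹ with hr_def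
  have hr : 0 ≤ r := by
    have : ((2 : ℝ) ^ (k ^ 2))⁻¹ ≤ 1 := inv_le_one_of_one_le₀ (one_le_pow₀ (by norm_num))
    linarith
  let F : Finset (Fin k × ZMod p → Fin n) := univ.filter Function.Injective
  have hcover : (univ : Finset (Sym2 (Fin n) → Bool)) ⊆
      F.biUnion fun f => avoid (target H f) (linePairs f) univ := by
    intro c _
    obtain ⟨f, hf, hb⟩ := hcon c
    simp only [mem_biUnion, F, avoid, mem_filter, mem_univ, true_and, true_implies]
    exact ⟨f, hf, hb⟩
  have hcard := (card_le_card hcover).trans card_biUnion_le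
  rw [card_univ, Fintype.card_fun, Fintype.card_bool] at hcard
  have hcard' : (2 : ℝ) ^ Fintype.card (Sym2 (Fin n)) ≤
      ∑ f ∈ F, ((avoid (target H f) (linePairs f) univ).card : ℝ) := by exact_mod_cast hcard
  have hsum : ∑ f ∈ F, ((avoid (target H f) (linePairs f) univ).card : ℝ) ≤
      F.card * (2 ^ Fintype.card (Sym2 (Fin n)) * r ^ (p * p)) := by
    rw [← nsmul_eq_mul]
    apply sum_le_card_nsmul
    intro f hf
    have := card_avoid_le (target H f) (linePairs f) (k ^ 2) (card_linePairs_le f)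
      (disjoint_linePairs hkp (mem_filter.mp hf).2) univ
    simpa [card_univ, ZMod.card] using this
  have hF : (F.card : ℝ) ≤ (n : ℝ) ^ (k * p) := by
    have : F.card ≤ n ^ (k * p) := by
      refine (card_le_univ F).trans ?_
      simp [ZMod.card]
    exact_mod_cast this
  have hN : (0 : ℝ) < 2 ^ Fintype.card (Sym2 (Fin n)) := by positivity
  have hpow : (n : ℝ) ^ (k * p) * r ^ (p * p) < 1 := by
    rw [pow_mul, pow_mul, ← mul_pow]
    exact pow_lt_one₀ (by positivity) hlt (Fact.out : p.Prime).ne_zero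
  have hfin : (F.card : ℝ) * (2 ^ Fintype.card (Sym2 (Fin n)) * r ^ (p * p)) ≤
      2 ^ Fintype.card (Sym2 (Fin n)) * ((n : ℝ) ^ (k * p) * r ^ (p * p)) := by
    calc _ ≤ (n : ℝ) ^ (k * p) * (2 ^ Fintype.card (Sym2 (Fin n)) * r ^ (p * p)) := by gcongr
      _ = _ := by ring
  have := mul_lt_mul_of_pos_left hpow hN
  linarith

lemma exists_graph {k p n : ℕ} [Fact p.Prime] (hkp : k ≤ p) (H : SimpleGraph (Fin k))
    (hlt : (n : ℝ) ^ k * (1 - (2 ^ (k ^ 2))⁻¹) ^ p < 1) :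
    ∃ G : SimpleGraph (Fin n), ∀ S : Finset (Fin n), k * p ≤ S.card →
      Nonempty (H ↪g (G.induce (S : Set (Fin n)))) := by
  obtain ⟨c, hc⟩ := exists_good hkp H hlt
  refine ⟨SimpleGraph.mk (fun x y => x ≠ y ∧ c s(x, y) = true)
    ⟨fun x y h => ⟨h.1.symm, by rw [Sym2.eq_swap]; exact h.2⟩⟩ ⟨fun x h => h.1 rfl⟩, ?_⟩
  intro S hS
  obtain ⟨φ⟩ : Nonempty ((Fin k × ZMod p) ↪ (S : Set (Fin n))) := by
    apply Function.Embedding.nonempty_of_card_le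
    simpa [ZMod.card] using hS
  have hinj : Function.Injective fun x => (φ x : Fin n) :=
    Subtype.val_injective.comp φ.injective
  obtain ⟨l, hl⟩ := hc _ hinj
  have hpt : Function.Injective (linePt k p l) := fun i j h => congrArg Prod.fst h
  refine ⟨⟨⟨fun i => φ (linePt k p l i), φ.injective.comp hpt⟩, ?_⟩⟩
  intro i j
  change ((φ (linePt k p l i) : Fin n) ≠ φ (linePt k p l j) ∧
    c s((φ (linePt k p l i) : Fin n), (φ (linePt k p l j) : Fin n)) = true) ↔ H.Adj i j
  by_cases hij : i = j
  · subst hij; simp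
  · have hmem : s((φ (linePt k p l i) : Fin n), (φ (linePt k p l j) : Fin n)) ∈
        linePairs (fun x => (φ x : Fin n)) l := by
      simp only [linePairs, mem_image, mem_filter, mem_univ, true_and, Prod.exists]
      exact ⟨i, j, hij, rfl⟩
    have hne : (φ (linePt k p l i) : Fin n) ≠ φ (linePt k p l j) :=
      fun h => hij (hpt (hinj h))
    rw [hl _ hmem, target_mk H hinj]
    exact ⟨fun h => h.2, fun h => ⟨hne, h⟩⟩

/-- For every finite simple graph `H` there exist `n₀ : ℕ` and a real
constant `α > 0` such that for all `n > n₀` there is a graph `G` on `n` vertices in which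
every induced subgraph on at least `α·log₂ n` vertices contains `H` as an induced
subgraph. -/
theorem stmt_6 (k : ℕ) (H : SimpleGraph (Fin k)) :
    ∃ (n₀ : ℕ) (α : ℝ), 0 < α ∧ ∀ n : ℕ, n > n₀ →
      ∃ G : SimpleGraph (Fin n), ∀ S : Finset (Fin n),
        α * Real.logb 2 (n : ℝ) ≤ (S.card : ℝ) →
        Nonempty (H ↪g (G.induce (S : Set (Fin n)))) := by
  -- `n ≥ 3` gives `1 ≤ log n`, which absorbs the additive constants in the choice of `p`.
  refine ⟨2, 2 * k * (k * 2 ^ (k ^ 2) + k + 2) + 1, by positivity, ?_⟩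
  intro n hn
  have hn3 : (3 : ℝ) ≤ n := by exact_mod_cast hn
  have hlog1 : 1 ≤ Real.log n := by
    rw [Real.le_log_iff_exp_le (by linarith)]
    linarith [Real.exp_one_lt_d9]
  have hlogb : Real.log n ≤ Real.logb 2 n := by
    rw [Real.logb, le_div_iff₀ (Real.log_pos (by norm_num))]
    nlinarith [Real.log_two_lt_d9]
  set L := Real.log n with hL
  obtain ⟨p, hp, htp, hp2⟩ :=
    Nat.exists_prime_lt_and_le_two_mul (⌈(k : ℝ) * 2 ^ (k ^ 2) * L⌉₊ + k + 1) (by omega)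
  have hceil := Nat.le_ceil ((k : ℝ) * 2 ^ (k ^ 2) * L)
  have hceil' := Nat.ceil_lt_add_one (a := (k : ℝ) * 2 ^ (k ^ 2) * L) (by positivity)
  have hpgt : (k : ℝ) * 2 ^ (k ^ 2) * L < p := by
    have : ((⌈(k : ℝ) * 2 ^ (k ^ 2) * L⌉₊ + k + 1 : ℕ) : ℝ) < p := by exact_mod_cast htp
    push_cast at this
    have hk : (0 : ℝ) ≤ k := by positivity
    linarith
  have hple : (p : ℝ) ≤ 2 * ((k * 2 ^ (k ^ 2) + k + 2) * L) := by
    have : (p : ℝ) ≤ ((2 * (⌈(k : ℝ) * 2 ^ (k ^ 2) * L⌉₊ + k + 1) : ℕ) : ℝ) := by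
      exact_mod_cast hp2
    push_cast at this
    have hk : (k : ℝ) * 1 ≤ k * L := by gcongr
    nlinarith
  have : Fact p.Prime := ⟨hp⟩
  have hlt : (n : ℝ) ^ k * (1 - (2 ^ (k ^ 2))⁻¹) ^ p < 1 := by
    have h1 : (1 : ℝ) - (2 ^ (k ^ 2))⁻¹ ≤ Real.exp (-(2 ^ (k ^ 2))⁻¹) :=
      Real.one_sub_le_exp_neg _
    have h0 : (0 : ℝ) ≤ 1 - (2 ^ (k ^ 2))⁻¹ := by
      have : ((2 : ℝ) ^ (k ^ 2))⁻¹ ≤ 1 := inv_le_one_of_one_le₀ (one_le_pow₀ (by norm_num))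
      linarith
    have hnexp : (n : ℝ) ^ k = Real.exp (k * L) := by
      rw [Real.exp_nat_mul, hL, Real.exp_log (by linarith)]
    calc (n : ℝ) ^ k * (1 - (2 ^ (k ^ 2))⁻¹) ^ p
        ≤ (n : ℝ) ^ k * Real.exp (-(2 ^ (k ^ 2))⁻¹) ^ p := by gcongr
      _ = Real.exp (k * L + p * -(2 ^ (k ^ 2))⁻¹) := by
          rw [hnexp, ← Real.exp_nat_mul, ← Real.exp_add]
      _ < 1 := by
          rw [Real.exp_lt_one_iff]
          have : (k : ℝ) * L < p * (2 ^ (k ^ 2))⁻¹ := by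
            rw [← div_eq_mul_inv, lt_div_iff₀ (by positivity)]
            linarith
          linarith
  obtain ⟨G, hG⟩ := exists_graph (by omega : k ≤ p) H hlt
  refine ⟨G, fun S hS => hG S ?_⟩
  have hkp : ((k * p : ℕ) : ℝ) ≤ S.card := by
    refine le_trans ?_ hS
    push_cast
    calc (k : ℝ) * p ≤ k * (2 * ((k * 2 ^ (k ^ 2) + k + 2) * L)) := by gcongr
      _ = (2 * k * (k * 2 ^ (k ^ 2) + k + 2)) * L := by ring
      _ ≤ (2 * k * (k * 2 ^ (k ^ 2) + k + 2) + 1) * L := by linarith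
      _ ≤ _ := by gcongr
  exact_mod_cast hkp
end

section
/- Let m ≥ 1 and σ ≥ 1 be natural numbers, and let G be the graph whose vertex set is partitioned into sets V₁, …, V_m, each of size σ, with a designated vertex c_i ∈ V_i for each i < m, and whose edges are: every pair of distinct vertices within the same V_i is adjacent, and a vertex u ∈ V_i is adjacent to a vertex w ∈ V_j with i < j if and only if u ≠ c_i. Then the maximum size of an independent set in G equals m; in particular, {c₁, …, c_{m−1}} together with any single vertex of V_m is a maximum independent set. -/
/-!
Each layer is a clique, so the projection to the layer index is injective on an independent set,
which therefore has at most `m` vertices. Conversely, the displayed set meets every layer exactly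
once, and for two of its vertices in different layers the one in the lower layer is not in the
last layer, hence is the designated vertex of its layer and is not adjacent to the other one.
-/

/-- A set of vertices is independent in a graph if no two of its members are adjacent. -/
def GraphIsIndepSet {V : Type*} (G : SimpleGraph V) (S : Set V) : Prop :=
  ∀ u ∈ S, ∀ w ∈ S, ¬ G.Adj u w

/-- Let `m, σ ≥ 1` and let `G` be the graph on the vertex set
`Fin m × Fin σ` (layer `i` is `V_i = {i} × Fin σ`, with designated vertex `c_i = (i, c i)`),
where two distinct vertices in the same layer are always adjacent, and `u` in layer `i` is
adjacent to `w` in layer `j > i` iff `u` is not the designated vertex of layer `i`.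
Then the independence number of `G` is `m`; in particular, the designated vertices of the
first `m − 1` layers together with any single vertex `(m−1, v)` of the last layer form a
maximum independent set. -/
theorem stmt_8 (m σ : ℕ) (hm : 1 ≤ m) (hσ : 1 ≤ σ) (c : Fin m → Fin σ)
    (G : SimpleGraph (Fin m × Fin σ))
    (hG : ∀ u w : Fin m × Fin σ, G.Adj u w ↔
      (u.1 = w.1 ∧ u.2 ≠ w.2) ∨ (u.1 < w.1 ∧ u.2 ≠ c u.1) ∨ (w.1 < u.1 ∧ w.2 ≠ c w.1)) :
    (∀ S : Finset (Fin m × Fin σ), GraphIsIndepSet G ↑S → S.card ≤ m) ∧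
    (∀ v : Fin σ,
      GraphIsIndepSet G
        ↑(Finset.image (fun i : Fin m => if (i : ℕ) < m - 1 then (i, c i) else (i, v))
          Finset.univ) ∧
      (Finset.image (fun i : Fin m => if (i : ℕ) < m - 1 then (i, c i) else (i, v))
        Finset.univ).card = m) := by
  have hfst : ∀ (v : Fin σ) (i : Fin m),
      (if (i : ℕ) < m - 1 then (i, c i) else (i, v)).1 = i := by
    intro v i
    split_ifs <;> rfl
  refine ⟨fun S hS => ?_, fun v => ⟨?_, ?_⟩⟩
  · have hinj : Set.InjOn Prod.fst (S : Set (Fin m × Fin σ)) := by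
      intro u hu w hw huw
      by_contra hne
      exact hS u hu w hw ((hG u w).2 (Or.inl ⟨huw, fun h => hne (Prod.ext huw h)⟩))
    simpa using Finset.card_le_card_of_injOn Prod.fst (fun _ _ => Finset.mem_univ _) hinj
  · -- A layer with another layer above it is not the last one.
    have hlow : ∀ i j : Fin m, i < j →
        (if (i : ℕ) < m - 1 then (i, c i) else (i, v)).2 = c i := by
      intro i j hij
      have : (i : ℕ) < m - 1 := by
        have := j.isLt
        have : (i : ℕ) < j := hij
        omega
      rw [if_pos this]
    intro u hu w hw hadj
    simp only [Finset.coe_image, Finset.coe_univ, Set.image_univ, Set.mem_range] at hu hw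
    obtain ⟨i, rfl⟩ := hu
    obtain ⟨j, rfl⟩ := hw
    rw [hG] at hadj
    simp only [hfst] at hadj
    rcases hadj with ⟨h, hne⟩ | ⟨h, hne⟩ | ⟨h, hne⟩
    · subst h
      exact hne rfl
    · exact hne (hlow i j h)
    · exact hne (hlow j i h)
  · rw [Finset.card_image_of_injective, Finset.card_univ, Fintype.card_fin]
    intro i j hij
    simpa only [hfst] using congrArg Prod.fst hij
end
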